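/- For every 1 ≤ ℓ, ℓ' ≤ q−1 with ℓ ≠ ℓ' (so q ≥ 3), det(I + Q_ℓ + Q_{ℓ'}) = 1 + μ·2/(q−1) − μ²·(3q−1)(q−3)/(q−1)² − μ³·2q(q−3)/(q−1)². -/

import Mathlib

open MeasureTheory ProbabilityTheory Real Finset Matrix

noncomputable section

/-- `α_i ∈ ℝ^q` (1-based `i` and 1-based coordinate index as in the paper). -/
def alphaVec (q i : ℕ) : Fin q → ℝ :=
  fun k => (Real.sqrt ((i : ℝ) * ((i : ℝ) + 1)))⁻¹ *
    (if (k : ℕ) + 1 < i + 1 then 1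
     else if (k : ℕ) + 1 = i + 1 then -(i : ℝ)
     else 0)

/-- `ω_{m,ℓ} = α_{m,ℓ}` for `1 ≤ m ≤ q−2` and `ω_{m,ℓ} = 0` for `m ∈ {q−1, q}`
(the index `m : Fin q` encodes the paper's 1-based index `m+1`). -/
def omegaVec (q : ℕ) (l : Fin q) : Fin q → ℝ :=
  fun m => if (m : ℕ) < q - 2 then alphaVec q ((m : ℕ) + 1) l else 0

/-- The matrix `Q_ℓ` with entries
`Q_{ℓ,mm'} = μ ω_{m,ℓ} ω_{m',ℓ} + √μ √(1+μq/(q−1)) (ω_{m,ℓ} δ_{m',q−1} + ω_{m',ℓ} δ_{m,q−1})`. -/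
def Qmat (q : ℕ) (μ : ℝ) (l : Fin q) : Matrix (Fin q) (Fin q) ℝ :=
  Matrix.of fun m m' =>
    μ * omegaVec q l m * omegaVec q l m'
    + Real.sqrt μ * Real.sqrt (1 + μ * (q : ℝ) / ((q : ℝ) - 1)) *
      (omegaVec q l m * (if (m' : ℕ) + 1 = q - 1 then 1 else 0)
        + omegaVec q l m' * (if (m : ℕ) + 1 = q - 1 then 1 else 0))

/-- The matrix `P` with entries `P_{mm'} = (1+μq/(q−1))⁻¹` times:
`μq/(q−1)` if `m=m'=q`; `−μq/(q−1)(2+μq/(q−1))` if `m=m'=q−1`;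
`√μ √(q/(q−1))` if `{m,m'} = {q−1,q}`; `0` otherwise. -/
def Pmat (q : ℕ) (μ : ℝ) : Matrix (Fin q) (Fin q) ℝ :=
  Matrix.of fun m m' =>
    (1 + μ * (q : ℝ) / ((q : ℝ) - 1))⁻¹ *
      (if (m : ℕ) + 1 = q ∧ (m' : ℕ) + 1 = q then μ * (q : ℝ) / ((q : ℝ) - 1)
       else if (m : ℕ) + 1 = q - 1 ∧ (m' : ℕ) + 1 = q - 1 then
         -(μ * (q : ℝ) / ((q : ℝ) - 1)) * (2 + μ * (q : ℝ) / ((q : ℝ) - 1))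
       else if ((m : ℕ) + 1 = q ∧ (m' : ℕ) + 1 = q - 1) ∨
               ((m : ℕ) + 1 = q - 1 ∧ (m' : ℕ) + 1 = q) then
         Real.sqrt μ * Real.sqrt ((q : ℝ) / ((q : ℝ) - 1))
       else 0)

/-!
`Q_ℓ = μ ωωᵀ + c (ωeᵀ + eωᵀ)` with `ω = ω_{·,ℓ}`, `e` the basis vector of index `q − 1` and
`c² = μ (1 + μq/(q−1))`. So `I + Q_ℓ + Q_{ℓ'}` differs from `I` by a matrix `WᵀSW`, where the three
rows of `W` are `ω_{·,ℓ}`, `ω_{·,ℓ'}`, `e`, and the determinant equals the `3 × 3` determinant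
`det(I + S · WWᵀ)`. The Gram matrix `WWᵀ` is known: `e` is a unit vector orthogonal to every `ω`,
and since the `α_i`, `1 ≤ i ≤ q − 2`, are an orthonormal basis of the orthogonal complement of
`(1, …, 1)` in `ℝ^{q−1}`, the inner product of `ω_{·,ℓ}` and `ω_{·,ℓ'}` is `δ_{ℓℓ'} − 1/(q−1)`.
-/

section RankThreeUpdate

variable {ι R : Type*} [CommRing R]

lemma vecMulVec_add_eq_transpose_mul_mul (a b e : ι → R) (μ c : R) :
    (μ • vecMulVec a a + c • (vecMulVec a e + vecMulVec e a))
        + (μ • vecMulVec b b + c • (vecMulVec b e + vecMulVec e b))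
      = (of ![a, b, e])ᵀ * !![μ, 0, c; 0, μ, c; c, c, 0] * of ![a, b, e] := by
  ext i j
  simp only [Matrix.add_apply, Matrix.smul_apply, smul_eq_mul, vecMulVec_apply, Matrix.mul_apply,
    transpose_apply, of_apply, Fin.sum_univ_three, Matrix.cons_val]
  ring

variable [Fintype ι]

lemma of_mul_transpose_of_orthogonal {a b e : ι → R} (hae : a ⬝ᵥ e = 0) (hbe : b ⬝ᵥ e = 0) :
    of ![a, b, e] * (of ![a, b, e])ᵀ
      = !![a ⬝ᵥ a, a ⬝ᵥ b, 0; a ⬝ᵥ b, b ⬝ᵥ b, 0; 0, 0, e ⬝ᵥ e] := by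
  have hea : e ⬝ᵥ a = 0 := by rw [dotProduct_comm, hae]
  have heb : e ⬝ᵥ b = 0 := by rw [dotProduct_comm, hbe]
  ext i j
  change ![a, b, e] i ⬝ᵥ ![a, b, e] j = _
  fin_cases i <;> fin_cases j <;> simp [hae, hbe, hea, heb, dotProduct_comm b a]

variable [DecidableEq ι]

lemma det_one_add_transpose_mul_mul {κ : Type*} [Fintype κ] [DecidableEq κ]
    (W : Matrix κ ι R) (S : Matrix κ κ R) :
    (1 + Wᵀ * S * W).det = (1 + S * (W * Wᵀ)).det := by
  rw [Matrix.mul_assoc, Matrix.det_one_add_mul_comm, Matrix.mul_assoc]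

lemma det_one_add_vecMulVec_add_of_orthogonal {a b e : ι → R}
    (hae : a ⬝ᵥ e = 0) (hbe : b ⬝ᵥ e = 0) (μ c : R) :
    (1 + (μ • vecMulVec a a + c • (vecMulVec a e + vecMulVec e a))
        + (μ • vecMulVec b b + c • (vecMulVec b e + vecMulVec e b))).det
      = 1 + μ * (a ⬝ᵥ a + b ⬝ᵥ b) + μ ^ 2 * ((a ⬝ᵥ a) * (b ⬝ᵥ b) - (a ⬝ᵥ b) ^ 2)
        - c ^ 2 * (e ⬝ᵥ e) * (a ⬝ᵥ a + b ⬝ᵥ b + 2 * (a ⬝ᵥ b)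
          + 2 * μ * ((a ⬝ᵥ a) * (b ⬝ᵥ b) - (a ⬝ᵥ b) ^ 2)) := by
  have one_add_mul_gram : 1 + !![μ, 0, c; 0, μ, c; c, c, 0]
        * !![a ⬝ᵥ a, a ⬝ᵥ b, 0; a ⬝ᵥ b, b ⬝ᵥ b, 0; 0, 0, e ⬝ᵥ e]
      = !![1 + μ * (a ⬝ᵥ a), μ * (a ⬝ᵥ b), c * (e ⬝ᵥ e);
          μ * (a ⬝ᵥ b), 1 + μ * (b ⬝ᵥ b), c * (e ⬝ᵥ e);
          c * (a ⬝ᵥ a) + c * (a ⬝ᵥ b), c * (a ⬝ᵥ b) + c * (b ⬝ᵥ b), 1] := by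
    ext i j
    fin_cases i <;> fin_cases j <;> simp
  rw [add_assoc, vecMulVec_add_eq_transpose_mul_mul, det_one_add_transpose_mul_mul,
    of_mul_transpose_of_orthogonal hae hbe, one_add_mul_gram, det_fin_three]
  simp only [of_apply, Matrix.cons_val]
  ring

end RankThreeUpdate

lemma inv_sqrt_mul_inv_sqrt {x : ℝ} (hx : 0 ≤ x) : (√x)⁻¹ * (√x)⁻¹ = x⁻¹ := by
  rw [← mul_inv, Real.mul_self_sqrt hx]

section Alpha

variable {q : ℕ} {i : ℕ} {k k' : Fin q}

lemma alphaVec_of_lt (h : (k : ℕ) < i) : alphaVec q i k = (√((i : ℝ) * (i + 1)))⁻¹ := by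
  simp [alphaVec, h]

lemma alphaVec_of_eq (h : (k : ℕ) = i) : alphaVec q i k = (√((i : ℝ) * (i + 1)))⁻¹ * -i := by
  simp [alphaVec, h]

lemma alphaVec_of_gt (h : i < (k : ℕ)) : alphaVec q i k = 0 := by
  simp [alphaVec, h.not_gt, h.ne']

lemma sum_alphaVec_mul_alphaVec_of_gt {n : ℕ} (h : n < (k : ℕ)) :
    ∑ m ∈ range n, alphaVec q (m + 1) k * alphaVec q (m + 1) k' = 0 :=
  Finset.sum_eq_zero fun m hm => by
    rw [alphaVec_of_gt (by have := Finset.mem_range.1 hm; omega), zero_mul]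

lemma sum_alphaVec_mul_alphaVec {n : ℕ} (hk : (k : ℕ) ≤ n) (hk' : (k' : ℕ) ≤ n) :
    ∑ m ∈ range n, alphaVec q (m + 1) k * alphaVec q (m + 1) k'
      = (if k = k' then 1 else 0) - 1 / ((n : ℝ) + 1) := by
  induction n with
  | zero =>
    obtain rfl : k = k' := by omega
    simp
  | succ n ih =>
    rw [Finset.sum_range_succ]
    have hsq := inv_sqrt_mul_inv_sqrt (x := ((n + 1 : ℕ) : ℝ) * ((n + 1 : ℕ) + 1)) (by positivity)
    rcases hk.lt_or_eq with hk | hk <;> rcases hk'.lt_or_eq with hk' | hk'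
    · rw [ih (by omega) (by omega), alphaVec_of_lt hk, alphaVec_of_lt hk', hsq]
      push_cast
      field_simp
      ring
    · rw [Finset.sum_congr rfl fun m _ => mul_comm _ _,
        sum_alphaVec_mul_alphaVec_of_gt (by omega), alphaVec_of_lt hk, alphaVec_of_eq hk',
        ← mul_assoc, hsq, if_neg (by omega)]
      push_cast
      field_simp
      ring
    · rw [sum_alphaVec_mul_alphaVec_of_gt (by omega), alphaVec_of_eq hk, alphaVec_of_lt hk',
        mul_right_comm, hsq, if_neg (by omega)]
      push_cast
      field_simp
      ring
    · rw [sum_alphaVec_mul_alphaVec_of_gt (by omega), alphaVec_of_eq hk, alphaVec_of_eq hk',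
        mul_mul_mul_comm, hsq, if_pos (by omega)]
      push_cast
      field_simp
      ring

end Alpha

lemma omegaVec_dotProduct_omegaVec {q : ℕ} {l l' : Fin q}
    (hl : (l : ℕ) < q - 1) (hl' : (l' : ℕ) < q - 1) :
    omegaVec q l ⬝ᵥ omegaVec q l' = (if l = l' then 1 else 0) - 1 / ((q : ℝ) - 1) := by
  have range_filter_lt : (range q).filter (· < q - 2) = range (q - 2) := by
    ext m
    simp only [Finset.mem_filter, Finset.mem_range]
    omega
  have cast_sub_two_add_one : ((q - 2 : ℕ) : ℝ) + 1 = q - 1 := by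
    rw [Nat.cast_sub (by omega)]
    push_cast
    ring
  calc omegaVec q l ⬝ᵥ omegaVec q l'
      = ∑ m : Fin q, if (m : ℕ) < q - 2 then
          alphaVec q (m + 1) l * alphaVec q (m + 1) l' else 0 :=
        Finset.sum_congr rfl fun m _ => by simp only [omegaVec, ite_zero_mul_ite_zero, and_self]
    _ = ∑ m ∈ range (q - 2), alphaVec q (m + 1) l * alphaVec q (m + 1) l' := by
        rw [Fin.sum_univ_eq_sum_range (fun m => if m < q - 2 then
          alphaVec q (m + 1) l * alphaVec q (m + 1) l' else 0), ← Finset.sum_filter,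
          range_filter_lt]
    _ = (if l = l' then 1 else 0) - 1 / ((q : ℝ) - 1) := by
        rw [sum_alphaVec_mul_alphaVec (by omega) (by omega), cast_sub_two_add_one]

lemma omegaVec_dotProduct_single {q : ℕ} {p : Fin q} (hp : (p : ℕ) + 1 = q - 1) (l : Fin q) :
    omegaVec q l ⬝ᵥ Pi.single p 1 = 0 := by
  rw [dotProduct_single_one, omegaVec, if_neg (by omega)]

lemma Qmat_eq_vecMulVec {q : ℕ} {p : Fin q} (hp : (p : ℕ) + 1 = q - 1) (μ : ℝ) (l : Fin q) :
    Qmat q μ l = μ • vecMulVec (omegaVec q l) (omegaVec q l)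
      + (√μ * √(1 + μ * q / ((q : ℝ) - 1))) •
        (vecMulVec (omegaVec q l) (Pi.single p 1) + vecMulVec (Pi.single p 1) (omegaVec q l)) := by
  have single_apply (m : Fin q) :
      (Pi.single p 1 : Fin q → ℝ) m = if (m : ℕ) + 1 = q - 1 then 1 else 0 := by
    rw [Pi.single_apply]
    exact if_congr (by omega) rfl rfl
  ext m m'
  simp only [Qmat, of_apply, Matrix.add_apply, Matrix.smul_apply, vecMulVec_apply, smul_eq_mul,
    single_apply]
  ring

/-- fourth determinant in the Proposition of the paper.
For every `1 ≤ ℓ, ℓ' ≤ q−1` with `ℓ ≠ ℓ'` (so `q ≥ 3`),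
`det(I + Q_ℓ + Q_{ℓ'}) = 1 + 2μ/(q−1) − μ²(3q−1)(q−3)/(q−1)² − 2μ³q(q−3)/(q−1)²`. -/
theorem det_I_add_Q_add_Q
    (q : ℕ) (hq : 3 ≤ q) (μ : ℝ) (hμ : 0 < μ)
    (l l' : Fin q) (hl : (l : ℕ) < q - 1) (hl' : (l' : ℕ) < q - 1) (hne : l ≠ l') :
    (1 + Qmat q μ l + Qmat q μ l').det
      = 1 + μ * 2 / ((q : ℝ) - 1)
        - μ ^ 2 * ((3 * (q : ℝ) - 1) * ((q : ℝ) - 3)) / ((q : ℝ) - 1) ^ 2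
        - μ ^ 3 * (2 * (q : ℝ) * ((q : ℝ) - 3)) / ((q : ℝ) - 1) ^ 2 := by
  obtain ⟨p, hp⟩ : ∃ p : Fin q, (p : ℕ) + 1 = q - 1 :=
    ⟨⟨q - 2, by omega⟩, show q - 2 + 1 = q - 1 by omega⟩
  have hq₁ : 0 < (q : ℝ) - 1 := by
    have : (3 : ℝ) ≤ q := by exact_mod_cast hq
    linarith
  have hc : (√μ * √(1 + μ * q / ((q : ℝ) - 1))) ^ 2 = μ * (1 + μ * q / ((q : ℝ) - 1)) := by
    rw [mul_pow, Real.sq_sqrt hμ.le, Real.sq_sqrt (by positivity)]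
  rw [Qmat_eq_vecMulVec hp, Qmat_eq_vecMulVec hp,
    det_one_add_vecMulVec_add_of_orthogonal (omegaVec_dotProduct_single hp l)
      (omegaVec_dotProduct_single hp l'),
    hc, single_one_dotProduct, Pi.single_eq_same,
    omegaVec_dotProduct_omegaVec hl hl, omegaVec_dotProduct_omegaVec hl' hl',
    omegaVec_dotProduct_omegaVec hl hl', if_pos rfl, if_pos rfl, if_neg hne]
  field_simp
  ring

end
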